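/- arXiv:2009.11640 — 2 statements merged into one kernel-verified Lean document; each statement's English description precedes it below -/
import Mathlib

section
/- Dempster's rule of combination is associative: let m₁, m₂, m₃ be basic belief assignments on a finite nonempty frame Θ such that the conflict of (m₁, m₂) is < 1, the conflict of (m₁ ⊕ m₂, m₃) is < 1, the conflict of (m₂, m₃) is < 1, and the conflict of (m₁, m₂ ⊕ m₃) is < 1. Then (m₁ ⊕ m₂) ⊕ m₃ = m₁ ⊕ (m₂ ⊕ m₃). -/
open Finset

/-- The conflict `k = Σ_{X ∩ Y = ∅} m₁(X)·m₂(Y)` of two basic belief assignments on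
the frame `Θ`. -/
def conflict {α : Type*} [DecidableEq α] (Θ : Finset α) (m₁ m₂ : Finset α → ℝ) : ℝ :=
  ∑ X ∈ Θ.powerset, ∑ Y ∈ Θ.powerset, if X ∩ Y = ∅ then m₁ X * m₂ Y else 0

/-- Dempster's rule of combination on the frame `Θ`:
`(m₁ ⊕ m₂)(A) = (1−k)⁻¹ · Σ_{X ∩ Y = A} m₁(X)·m₂(Y)` for `A ≠ ∅`, and
`(m₁ ⊕ m₂)(∅) = 0`. -/
noncomputable def dempster {α : Type*} [DecidableEq α] (Θ : Finset α) (m₁ m₂ : Finset α → ℝ)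
    (A : Finset α) : ℝ :=
  if A = ∅ then 0 else
    (1 - conflict Θ m₁ m₂)⁻¹ *
      ∑ X ∈ Θ.powerset, ∑ Y ∈ Θ.powerset, if X ∩ Y = A then m₁ X * m₂ Y else 0

/-!
Up to a nonzero factor, and away from `∅`, Dempster's rule is the conjunctive combination
`A ↦ Σ_{X ∩ Y = A} m₁(X)·m₂(Y)`, which inherits associativity from `∩` and multiplication. Masses
placed on `∅` reach only `∅`, so conjunctive combination respects such proportionality, and the two
sides of the associativity law are proportional. Both have total mass `1`, so the factor is `1`.
-/

section Conjunctive

variable {α R : Type*} [DecidableEq α]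

/-- The conjunctive combination on the frame `Θ`: Dempster's rule before the mass of `∅` is
discarded and the rest is renormalized. -/
def conjunctive [Semiring R] (Θ : Finset α) (m₁ m₂ : Finset α → R) (A : Finset α) : R :=
  ∑ X ∈ Θ.powerset, ∑ Y ∈ Θ.powerset, if X ∩ Y = A then m₁ X * m₂ Y else 0

theorem conjunctive_comm [CommSemiring R] (Θ : Finset α) (m₁ m₂ : Finset α → R) :
    conjunctive Θ m₁ m₂ = conjunctive Θ m₂ m₁ := by
  funext A
  unfold conjunctive
  rw [sum_comm]
  simp only [inter_comm, mul_comm]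

variable [Semiring R] (Θ : Finset α)

theorem sum_conjunctive_mul (m₁ m₂ φ : Finset α → R) :
    ∑ W ∈ Θ.powerset, conjunctive Θ m₁ m₂ W * φ W =
      ∑ X ∈ Θ.powerset, ∑ Y ∈ Θ.powerset, m₁ X * m₂ Y * φ (X ∩ Y) := by
  simp only [conjunctive, sum_mul]
  rw [sum_comm]
  refine sum_congr rfl fun X hX => ?_
  rw [sum_comm]
  refine sum_congr rfl fun Y _ => ?_
  have hXY : X ∩ Y ∈ Θ.powerset :=
    mem_powerset.2 (inter_subset_left.trans (mem_powerset.1 hX))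
  simp only [ite_mul, zero_mul, sum_ite_eq, if_pos hXY]

theorem sum_conjunctive (m₁ m₂ : Finset α → R) :
    ∑ A ∈ Θ.powerset, conjunctive Θ m₁ m₂ A =
      (∑ X ∈ Θ.powerset, m₁ X) * ∑ Y ∈ Θ.powerset, m₂ Y := by
  simpa [sum_mul_sum] using sum_conjunctive_mul Θ m₁ m₂ 1

theorem conjunctive_assoc (m₁ m₂ m₃ : Finset α → R) :
    conjunctive Θ (conjunctive Θ m₁ m₂) m₃ = conjunctive Θ m₁ (conjunctive Θ m₂ m₃) := by
  funext A
  have left : conjunctive Θ (conjunctive Θ m₁ m₂) m₃ A =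
      ∑ X ∈ Θ.powerset, ∑ Y ∈ Θ.powerset, ∑ Z ∈ Θ.powerset,
        if X ∩ Y ∩ Z = A then m₁ X * m₂ Y * m₃ Z else 0 := by
    have h := sum_conjunctive_mul Θ m₁ m₂ fun W => ∑ Z ∈ Θ.powerset, if W ∩ Z = A then m₃ Z else 0
    simp only [mul_sum, mul_ite, mul_zero] at h
    exact h
  have right : conjunctive Θ m₁ (conjunctive Θ m₂ m₃) A =
      ∑ X ∈ Θ.powerset, ∑ Y ∈ Θ.powerset, ∑ Z ∈ Θ.powerset,
        if X ∩ (Y ∩ Z) = A then m₁ X * (m₂ Y * m₃ Z) else 0 := by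
    refine sum_congr rfl fun X _ => ?_
    have h := congrArg (m₁ X * ·)
      (sum_conjunctive_mul Θ m₂ m₃ fun W => if X ∩ W = A then 1 else 0)
    simp only [mul_sum, mul_ite, mul_zero, mul_one] at h
    exact h
  simp only [left, right, inter_assoc, mul_assoc]

end Conjunctive

section Proportional

variable {α R : Type*}

/-- Equality up to an invertible factor away from `∅`: the two mass functions have the same
normalization once the mass of `∅` is discarded. -/
def ProportionalOffEmpty [Monoid R] (f g : Finset α → R) : Prop :=
  ∃ c : Rˣ, ∀ A ≠ ∅, f A = c * g A

namespace ProportionalOffEmpty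

protected theorem symm [Monoid R] {f g : Finset α → R} (h : ProportionalOffEmpty f g) :
    ProportionalOffEmpty g f := by
  obtain ⟨c, hc⟩ := h
  exact ⟨c⁻¹, fun A hA => by rw [hc A hA, Units.inv_mul_cancel_left]⟩

protected theorem trans [Monoid R] {f g h : Finset α → R} (hfg : ProportionalOffEmpty f g)
    (hgh : ProportionalOffEmpty g h) : ProportionalOffEmpty f h := by
  obtain ⟨c, hc⟩ := hfg
  obtain ⟨d, hd⟩ := hgh
  exact ⟨c * d, fun A hA => by rw [hc A hA, hd A hA, Units.val_mul, mul_assoc]⟩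

theorem eq_of_sum_eq_one [Semiring R] {f g : Finset α → R} (h : ProportionalOffEmpty f g)
    (hf : f ∅ = 0) (hg : g ∅ = 0) {s : Finset (Finset α)} (hfs : ∑ A ∈ s, f A = 1)
    (hgs : ∑ A ∈ s, g A = 1) : f = g := by
  obtain ⟨c, hc⟩ := h
  have hfg (A : Finset α) : f A = c * g A := by
    obtain rfl | hA := eq_or_ne A ∅
    · rw [hf, hg, mul_zero]
    · exact hc A hA
  have hc_one : (c : R) = 1 := by
    simpa only [hfg, ← mul_sum, hgs, mul_one] using hfs
  funext A
  rw [hfg, hc_one, one_mul]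

variable [DecidableEq α]

theorem conjunctive_left [Semiring R] {f g : Finset α → R} (h : ProportionalOffEmpty f g)
    (Θ : Finset α) (m : Finset α → R) :
    ProportionalOffEmpty (conjunctive Θ f m) (conjunctive Θ g m) := by
  obtain ⟨c, hc⟩ := h
  refine ⟨c, fun A hA => ?_⟩
  simp only [conjunctive, mul_sum]
  refine sum_congr rfl fun X _ => sum_congr rfl fun Y _ => ?_
  split_ifs with hXY
  · have hX : X ≠ ∅ := by
      rintro rfl
      exact hA (by rw [← hXY, empty_inter])
    rw [hc X hX, mul_assoc]
  · rw [mul_zero]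

theorem conjunctive_right [CommSemiring R] {f g : Finset α → R} (h : ProportionalOffEmpty f g)
    (Θ : Finset α) (m : Finset α → R) :
    ProportionalOffEmpty (conjunctive Θ m f) (conjunctive Θ m g) := by
  simpa only [conjunctive_comm Θ m] using h.conjunctive_left Θ m

end ProportionalOffEmpty

end Proportional

section Dempster

variable {α : Type*} [DecidableEq α] (Θ : Finset α) (m₁ m₂ : Finset α → ℝ)

theorem dempster_empty : dempster Θ m₁ m₂ ∅ = 0 :=
  if_pos rfl

theorem dempster_of_ne_empty {A : Finset α} (hA : A ≠ ∅) :
    dempster Θ m₁ m₂ A = (1 - conflict Θ m₁ m₂)⁻¹ * conjunctive Θ m₁ m₂ A :=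
  if_neg hA

variable {Θ m₁ m₂}

theorem dempster_proportionalOffEmpty_conjunctive (hk : conflict Θ m₁ m₂ ≠ 1) :
    ProportionalOffEmpty (dempster Θ m₁ m₂) (conjunctive Θ m₁ m₂) :=
  ⟨(Units.mk0 (1 - conflict Θ m₁ m₂) (sub_ne_zero.2 hk.symm))⁻¹, fun A hA => by
    rw [dempster_of_ne_empty Θ m₁ m₂ hA, Units.val_inv_eq_inv_val, Units.val_mk0]⟩

theorem sum_erase_empty_conjunctive (h₁ : ∑ A ∈ Θ.powerset, m₁ A = 1)
    (h₂ : ∑ A ∈ Θ.powerset, m₂ A = 1) :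
    ∑ A ∈ Θ.powerset.erase ∅, conjunctive Θ m₁ m₂ A = 1 - conflict Θ m₁ m₂ := by
  rw [sum_erase_eq_sub (empty_mem_powerset Θ), sum_conjunctive, h₁, h₂, mul_one]
  rfl

theorem sum_dempster (h₁ : ∑ A ∈ Θ.powerset, m₁ A = 1) (h₂ : ∑ A ∈ Θ.powerset, m₂ A = 1)
    (hk : conflict Θ m₁ m₂ ≠ 1) : ∑ A ∈ Θ.powerset, dempster Θ m₁ m₂ A = 1 :=
  calc
    ∑ A ∈ Θ.powerset, dempster Θ m₁ m₂ A = ∑ A ∈ Θ.powerset.erase ∅, dempster Θ m₁ m₂ A :=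
      (sum_erase _ (dempster_empty Θ m₁ m₂)).symm
    _ = ∑ A ∈ Θ.powerset.erase ∅, (1 - conflict Θ m₁ m₂)⁻¹ * conjunctive Θ m₁ m₂ A :=
      sum_congr rfl fun _ hA => dempster_of_ne_empty Θ m₁ m₂ (ne_of_mem_erase hA)
    _ = (1 - conflict Θ m₁ m₂)⁻¹ * (1 - conflict Θ m₁ m₂) := by
      rw [← mul_sum, sum_erase_empty_conjunctive h₁ h₂]
    _ = 1 := inv_mul_cancel₀ (sub_ne_zero.2 hk.symm)

end Dempster

theorem dempster_assoc_general
    {α : Type*} [DecidableEq α] (Θ : Finset α) (m₁ m₂ m₃ : Finset α → ℝ)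
    (h₁sum : ∑ A ∈ Θ.powerset, m₁ A = 1)
    (h₂sum : ∑ A ∈ Θ.powerset, m₂ A = 1)
    (h₃sum : ∑ A ∈ Θ.powerset, m₃ A = 1)
    (hk₁₂ : conflict Θ m₁ m₂ ≠ 1)
    (hk₁₂₃ : conflict Θ (dempster Θ m₁ m₂) m₃ ≠ 1)
    (hk₂₃ : conflict Θ m₂ m₃ ≠ 1)
    (hk₁₂₃' : conflict Θ m₁ (dempster Θ m₂ m₃) ≠ 1) :
    dempster Θ (dempster Θ m₁ m₂) m₃ = dempster Θ m₁ (dempster Θ m₂ m₃) := by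
  have left : ProportionalOffEmpty (dempster Θ (dempster Θ m₁ m₂) m₃)
      (conjunctive Θ (conjunctive Θ m₁ m₂) m₃) :=
    (dempster_proportionalOffEmpty_conjunctive hk₁₂₃).trans
      ((dempster_proportionalOffEmpty_conjunctive hk₁₂).conjunctive_left Θ m₃)
  have right : ProportionalOffEmpty (dempster Θ m₁ (dempster Θ m₂ m₃))
      (conjunctive Θ m₁ (conjunctive Θ m₂ m₃)) :=
    (dempster_proportionalOffEmpty_conjunctive hk₁₂₃').trans
      ((dempster_proportionalOffEmpty_conjunctive hk₂₃).conjunctive_right Θ m₁)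
  rw [conjunctive_assoc] at left
  exact (left.trans right.symm).eq_of_sum_eq_one (dempster_empty _ _ _) (dempster_empty _ _ _)
    (sum_dempster (sum_dempster h₁sum h₂sum hk₁₂) h₃sum hk₁₂₃)
    (sum_dempster h₁sum (sum_dempster h₂sum h₃sum hk₂₃) hk₁₂₃')

/-- Dempster's rule is associative: for BBAs `m₁, m₂, m₃` on a finite nonempty frame `Θ`,
if the conflicts of `(m₁, m₂)`, `(m₁ ⊕ m₂, m₃)`, `(m₂, m₃)` and `(m₁, m₂ ⊕ m₃)` are
all `< 1`, then `(m₁ ⊕ m₂) ⊕ m₃ = m₁ ⊕ (m₂ ⊕ m₃)`. -/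
theorem dempster_assoc
    {α : Type*} [DecidableEq α] (Θ : Finset α) (hΘ : Θ.Nonempty)
    (m₁ m₂ m₃ : Finset α → ℝ)
    (h₁nonneg : ∀ X, 0 ≤ m₁ X) (h₁empty : m₁ ∅ = 0)
    (h₁sum : ∑ A ∈ Θ.powerset, m₁ A = 1)
    (h₂nonneg : ∀ X, 0 ≤ m₂ X) (h₂empty : m₂ ∅ = 0)
    (h₂sum : ∑ A ∈ Θ.powerset, m₂ A = 1)
    (h₃nonneg : ∀ X, 0 ≤ m₃ X) (h₃empty : m₃ ∅ = 0)
    (h₃sum : ∑ A ∈ Θ.powerset, m₃ A = 1)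
    (hk₁₂ : conflict Θ m₁ m₂ < 1)
    (hk₁₂₃ : conflict Θ (dempster Θ m₁ m₂) m₃ < 1)
    (hk₂₃ : conflict Θ m₂ m₃ < 1)
    (hk₁₂₃' : conflict Θ m₁ (dempster Θ m₂ m₃) < 1) :
    dempster Θ (dempster Θ m₁ m₂) m₃ = dempster Θ m₁ (dempster Θ m₂ m₃) :=
  dempster_assoc_general Θ m₁ m₂ m₃ h₁sum h₂sum h₃sum hk₁₂.ne hk₁₂₃.ne hk₂₃.ne hk₁₂₃'.ne
end

section
/- Let Θ be a finite nonempty frame, ι a nonempty finite index set, and for each i ∈ ι let m_i be the simple basic belief assignment with focal set B'_i, where ∅ ≠ B'_i ⊊ Θ and weight a_i ∈ (0,1). Assume the sets B'_i are pairwise distinct and form an antichain under inclusion (no B'_i is contained in another B'_j for i ≠ j). Let m be their Dempster combination and k the total conflict. Then for each i ∈ ι, m(B'_i) = (1−k)⁻¹ · a_i · Π_{j ≠ i} (1 − a_j); that is, no intersection of two or more distinct subbases can coincide with any B'_i, so the only term contributing to m(B'_i) is S = {i}. -/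
open Finset

/-- The intersection `⋂_{i ∈ S} B'_i` taken within the frame `Θ`, with the convention
that the empty intersection (`S = ∅`) is the whole frame `Θ`. -/
def interS {α ι : Type*} [DecidableEq α] (Θ : Finset α) (B : ι → Finset α)
    (S : Finset ι) : Finset α :=
  Θ.filter (fun x => ∀ i ∈ S, x ∈ B i)

/-- The conjunctive weight `Π_{i ∈ S} a_i · Π_{i ∉ S} (1 − a_i)` of a subfamily `S` when
combining the simple BBAs with focal sets `B'_i` and weights `a_i`. -/
def weight {ι : Type*} [Fintype ι] [DecidableEq ι] (a : ι → ℝ) (S : Finset ι) : ℝ :=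
  (∏ i ∈ S, a i) * ∏ i ∈ Finset.univ \ S, (1 - a i)

/-- The total conflict `k` of the conjunctive combination of the simple BBAs with focal
sets `B'_i ⊆ Θ` and weights `a_i`: the total weight of the subfamilies with empty
intersection. -/
def totalConflict {α ι : Type*} [DecidableEq α] [Fintype ι] [DecidableEq ι]
    (Θ : Finset α) (B : ι → Finset α) (a : ι → ℝ) : ℝ :=
  ∑ S ∈ (Finset.univ : Finset ι).powerset,
    if interS Θ B S = ∅ then weight a S else 0

/-- The Dempster combination of the simple BBAs with focal sets `B'_i ⊆ Θ` and weights
`a_i`: `m(X) = (1−k)⁻¹ · Σ_{S : ⋂_{i ∈ S} B'_i = X} Π_{i ∈ S} a_i · Π_{i ∉ S} (1 − a_i)`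
for `X ≠ ∅`, and `m(∅) = 0`. -/
noncomputable def dempsterCombo {α ι : Type*} [DecidableEq α] [Fintype ι] [DecidableEq ι]
    (Θ : Finset α) (B : ι → Finset α) (a : ι → ℝ) (X : Finset α) : ℝ :=
  if X = ∅ then 0 else
    (1 - totalConflict Θ B a)⁻¹ *
      ∑ S ∈ (Finset.univ : Finset ι).powerset,
        if interS Θ B S = X then weight a S else 0

section interS

variable {α ι : Type*} [DecidableEq α] {Θ : Finset α} {B : ι → Finset α} {S : Finset ι} {i : ι}

theorem interS_empty (Θ : Finset α) (B : ι → Finset α) : interS Θ B ∅ = Θ := by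
  simp [interS]

theorem interS_singleton (hi : B i ⊆ Θ) : interS Θ B {i} = B i := by
  ext x
  simpa [interS] using @hi x

theorem interS_subset_of_mem (Θ : Finset α) (B : ι → Finset α) (hi : i ∈ S) :
    interS Θ B S ⊆ B i :=
  fun _ hx => (mem_filter.mp hx).2 i hi

theorem interS_eq_iff_eq_singleton (hi : B i ⊂ Θ) (hB : ∀ j, j ≠ i → ¬ B i ⊆ B j) :
    interS Θ B S = B i ↔ S = {i} := by
  refine ⟨fun h => ?_, fun h => h ▸ interS_singleton hi.subset⟩
  have hS : S ≠ ∅ := by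
    rintro rfl
    exact hi.ne (h.symm.trans (interS_empty Θ B))
  have hmem : ∀ j ∈ S, j = i := fun j hj =>
    not_imp_not.mp (hB j) (h ▸ interS_subset_of_mem Θ B hj)
  exact eq_singleton_iff_nonempty_unique_mem.mpr ⟨nonempty_iff_ne_empty.mpr hS, hmem⟩

end interS

section dempsterCombo

variable {α ι : Type*} [DecidableEq α] [Fintype ι] [DecidableEq ι]

theorem weight_singleton (a : ι → ℝ) (i : ι) :
    weight a {i} = a i * ∏ j ∈ univ.erase i, (1 - a j) := by
  rw [weight, prod_singleton, sdiff_singleton_eq_erase]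

theorem dempsterCombo_eq_of_interS_eq_iff {Θ X : Finset α} {B : ι → Finset α} {T : Finset ι}
    (hX : X.Nonempty) (hT : ∀ S, interS Θ B S = X ↔ S = T) (a : ι → ℝ) :
    dempsterCombo Θ B a X = (1 - totalConflict Θ B a)⁻¹ * weight a T := by
  simp [dempsterCombo, hX.ne_empty, hT]

theorem dempsterCombo_single_general {Θ : Finset α} {B : ι → Finset α} {i : ι}
    (hne : (B i).Nonempty) (hi : B i ⊂ Θ) (hB : ∀ j, j ≠ i → ¬ B i ⊆ B j) (a : ι → ℝ) :
    dempsterCombo Θ B a (B i) =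
      (1 - totalConflict Θ B a)⁻¹ * (a i * ∏ j ∈ univ.erase i, (1 - a j)) := by
  rw [← weight_singleton]
  exact dempsterCombo_eq_of_interS_eq_iff hne (fun _ => interS_eq_iff_eq_singleton hi hB) a

end dempsterCombo

/-- If the nonempty proper focal sets `B'_i ⊊ Θ` are pairwise distinct and form an
antichain under inclusion, then in the Dempster combination the only subfamily whose
intersection is `B'_i` is `S = {i}`, hence
`m(B'_i) = (1−k)⁻¹ · a_i · Π_{j ≠ i} (1 − a_j)`. -/
theorem dempsterCombo_single
    {α ι : Type*} [DecidableEq α] [Fintype ι] [DecidableEq ι] [Nonempty ι]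
    (Θ : Finset α) (hΘ : Θ.Nonempty)
    (B : ι → Finset α) (hBne : ∀ i, (B i).Nonempty) (hBsub : ∀ i, B i ⊂ Θ)
    (hdistinct : ∀ i j, i ≠ j → B i ≠ B j)
    (hantichain : ∀ i j, i ≠ j → ¬ B i ⊆ B j)
    (a : ι → ℝ) (ha : ∀ i, 0 < a i ∧ a i < 1) (i : ι) :
    dempsterCombo Θ B a (B i) =
      (1 - totalConflict Θ B a)⁻¹ *
        (a i * ∏ j ∈ Finset.univ.erase i, (1 - a j)) := by
  exact dempsterCombo_single_general (hBne i) (hBsub i) (fun j hj => hantichain i j hj.symm) a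
end
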